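/- Let u, v ∈ F₂ with ‖u‖ ≥ ‖v‖, put k = ‖u‖+1, and suppose that u and v are boundedly translation equivalent in F₂. Then for every chain ψ₁ of type (C1) of length at most 2‖u‖+5 one has: ‖σ^{k+1}ψ₁(u)‖ = ‖σ^{k}ψ₁(u)‖ if and only if ‖σ^{k+1}ψ₁(v)‖ = ‖σ^{k}ψ₁(v)‖, and ‖τ^{k+1}ψ₁(u)‖ = ‖τ^{k}ψ₁(u)‖ if and only if ‖τ^{k+1}ψ₁(v)‖ = ‖τ^{k}ψ₁(v)‖; and for every chain ψ₂ of type (C2) of length at most 2‖u‖+5 one has: ‖σ^{-k-1}ψ₂(u)‖ = ‖σ^{-k}ψ₂(u)‖ if and only if ‖σ^{-k-1}ψ₂(v)‖ = ‖σ^{-k}ψ₂(v)‖, and ‖τ^{-k-1}ψ₂(u)‖ = ‖τ^{-k}ψ₂(u)‖ if and only if ‖τ^{-k-1}ψ₂(v)‖ = ‖τ^{-k}ψ₂(v)‖. -/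

import Mathlib

noncomputable section

/-- The free group of rank two. -/
abbrev F : Type := FreeGroup (Fin 2)

/-- The generator `a`. -/
def ga : F := FreeGroup.of 0

/-- The generator `b`. -/
def gb : F := FreeGroup.of 1

/-- Build an automorphism of `F` from images of the generators together with
an explicit inverse. -/
def mkAut (x y xi yi : F)
    (h1 : FreeGroup.lift ![xi, yi] x = ga)
    (h2 : FreeGroup.lift ![xi, yi] y = gb)
    (h3 : FreeGroup.lift ![x, y] xi = ga)
    (h4 : FreeGroup.lift ![x, y] yi = gb) : MulAut F :=
  MonoidHom.toMulEquiv (FreeGroup.lift ![x, y]) (FreeGroup.lift ![xi, yi])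
    (by
      ext i
      fin_cases i
      · simpa [ga] using h1
      · simpa [gb] using h2)
    (by
      ext i
      fin_cases i
      · simpa [ga] using h3
      · simpa [gb] using h4)

/-- `σ : a ↦ ab, b ↦ b`. -/
def σ : MulAut F :=
  mkAut (ga * gb) gb (ga * gb⁻¹) gb
    (by simp [ga, gb]) (by simp [ga, gb]) (by simp [ga, gb]) (by simp [ga, gb])

/-- `τ : a ↦ a, b ↦ ba`. -/
def τ : MulAut F :=
  mkAut ga (gb * ga) ga (gb * ga⁻¹)
    (by simp [ga, gb]) (by simp [ga, gb]) (by simp [ga, gb]) (by simp [ga, gb])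

/-- `δ₁ : a ↦ b⁻¹ab, b ↦ b`. -/
def δ₁ : MulAut F :=
  mkAut (gb⁻¹ * ga * gb) gb (gb * ga * gb⁻¹) gb
    (by simp [ga, gb, mul_assoc]) (by simp [ga, gb]) (by simp [ga, gb, mul_assoc]) (by simp [ga, gb])

/-- `δ₂ : a ↦ bab⁻¹, b ↦ b`. -/
def δ₂ : MulAut F :=
  mkAut (gb * ga * gb⁻¹) gb (gb⁻¹ * ga * gb) gb
    (by simp [ga, gb, mul_assoc]) (by simp [ga, gb]) (by simp [ga, gb, mul_assoc]) (by simp [ga, gb])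

/-- `δ₃ : a ↦ a, b ↦ a⁻¹ba`. -/
def δ₃ : MulAut F :=
  mkAut ga (ga⁻¹ * gb * ga) ga (ga * gb * ga⁻¹)
    (by simp [ga, gb]) (by simp [ga, gb, mul_assoc]) (by simp [ga, gb]) (by simp [ga, gb, mul_assoc])

/-- `δ₄ : a ↦ a, b ↦ aba⁻¹`. -/
def δ₄ : MulAut F :=
  mkAut ga (ga * gb * ga⁻¹) ga (ga⁻¹ * gb * ga)
    (by simp [ga, gb]) (by simp [ga, gb, mul_assoc]) (by simp [ga, gb]) (by simp [ga, gb, mul_assoc])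

/-- `π : a ↦ b, b ↦ a⁻¹`. -/
def pi' : MulAut F :=
  mkAut gb ga⁻¹ gb⁻¹ ga
    (by simp [ga, gb]) (by simp [ga, gb]) (by simp [ga, gb]) (by simp [ga, gb])

/-- Word length of (the reduced word representing) an element of `F`. -/
def len (w : F) : ℕ := w.toWord.length

/-- Cyclic length: minimal word length among all conjugates. -/
def cyclen (w : F) : ℕ := sInf {n | ∃ g : F, len (g * w * g⁻¹) = n}

/-- The chain `τ^{m_k}σ^{l_k}⋯τ^{m_1}σ^{l_1}` of type (C1) determined by the list
`[(l_k, m_k), …, (l_1, m_1)]` of pairs of exponents. -/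
def chainC1 (c : List (ℕ × ℕ)) : MulAut F :=
  (c.map fun p => τ ^ p.2 * σ ^ p.1).prod

/-- The chain `τ^{-m_k}σ^{-l_k}⋯τ^{-m_1}σ^{-l_1}` of type (C2) determined by the list
`[(l_k, m_k), …, (l_1, m_1)]` of pairs of exponents. -/
def chainC2 (c : List (ℕ × ℕ)) : MulAut F :=
  (c.map fun p => (τ ^ p.2)⁻¹ * (σ ^ p.1)⁻¹).prod

/-- Number of factors of `σ` in a chain. -/
def sigmaCount (c : List (ℕ × ℕ)) : ℕ := (c.map Prod.fst).sum

/-- Number of factors of `τ` in a chain. -/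
def tauCount (c : List (ℕ × ℕ)) : ℕ := (c.map Prod.snd).sum

/-- The length `Σ (l_i + m_i)` of a chain. -/
def chainLen (c : List (ℕ × ℕ)) : ℕ := sigmaCount c + tauCount c

/-- A Whitehead automorphism of type (W1): it permutes `{a, a⁻¹, b, b⁻¹}`. -/
def IsW1 (β : MulAut F) : Prop :=
  β ga ∈ ({ga, ga⁻¹, gb, gb⁻¹} : Set F) ∧ β gb ∈ ({ga, ga⁻¹, gb, gb⁻¹} : Set F)

/-- A chain of type (C1). -/
def IsC1 (φ : MulAut F) : Prop := ∃ c : List (ℕ × ℕ), c ≠ [] ∧ φ = chainC1 c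

/-- A chain of type (C2). -/
def IsC2 (φ : MulAut F) : Prop := ∃ c : List (ℕ × ℕ), c ≠ [] ∧ φ = chainC2 c

/-- A positive element: a product of the generators `a` and `b`. -/
def IsPositive (w : F) : Prop := w ∈ Submonoid.closure ({ga, gb} : Set F)

/-- The four automorphisms `δ₁, δ₂, δ₃, δ₄`. -/
def δIdx : Fin 4 → MulAut F := ![δ₁, δ₂, δ₃, δ₄]


open FreeGroup

/-! ### Cyclic length -/

abbrev Wd : Type := List (Fin 2 × Bool)

theorem len_mul_le (x y : F) : len (x * y) ≤ len x + len y := norm_mul_le x y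

theorem len_inv (x : F) : len x⁻¹ = len x := norm_inv_eq

theorem len_pow_le (x : F) (n : ℕ) : len (x ^ n) ≤ n * len x := by
  induction n with
  | zero => simp [len]
  | succ n ih =>
    rw [pow_succ]
    have := len_mul_le (x ^ n) x
    linarith

theorem len_pow_cyc {L : Wd} (h : IsCyclicallyReduced L) (n : ℕ) :
    len ((mk L) ^ n) = n * L.length := by
  have h1 : (mk L : F).toWord = L := by
    rw [toWord_mk]; exact h.isReduced.reduce_eq
  rw [len, toWord_pow, h1, (h.flatten_replicate n).isReduced.reduce_eq]
  simp

theorem cyc_le_conj {L : Wd} (h : IsCyclicallyReduced L) (g : F) :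
    L.length ≤ len (g * mk L * g⁻¹) := by
  by_contra hlt
  push Not at hlt
  set x : F := g * mk L * g⁻¹ with hx
  have key : ∀ n : ℕ, n * L.length ≤ n * len x + 2 * len g := by
    intro n
    have e : (mk L : F) ^ n = g⁻¹ * x ^ n * g := by
      rw [hx, conj_pow]; group
    have h1 := len_mul_le (g⁻¹ * x ^ n) g
    have h2 := len_mul_le g⁻¹ (x ^ n)
    have h3 := len_pow_le x n
    rw [len_inv] at h2
    rw [← len_pow_cyc h n, e]
    omega
  have := key (2 * len g + 1)
  nlinarith

theorem cyclen_eq {L : Wd} {w : F} (h : IsCyclicallyReduced L) (hc : IsConj (mk L) w) :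
    cyclen w = L.length := by
  obtain ⟨g, hg⟩ := isConj_iff.1 hc
  unfold cyclen
  apply le_antisymm
  · apply Nat.sInf_le
    refine ⟨g⁻¹, ?_⟩
    rw [← hg]
    have : g⁻¹ * (g * mk L * g⁻¹) * g⁻¹⁻¹ = (mk L : F) := by group
    rw [this, len, toWord_mk, h.isReduced.reduce_eq]
  · apply le_csInf
    · exact ⟨_, 1, rfl⟩
    · rintro n ⟨k, rfl⟩
      rw [← hg]
      have : k * (g * mk L * g⁻¹) * k⁻¹ = (k * g) * mk L * (k * g)⁻¹ := by group
      rw [this]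
      exact cyc_le_conj h _

theorem exists_rep (w : F) : ∃ L : Wd, IsCyclicallyReduced L ∧ IsConj (mk L) w := by
  refine ⟨reduceCyclically w.toWord, reduceCyclically.isCyclicallyReduced isReduced_toWord, ?_⟩
  rw [isConj_iff]
  refine ⟨mk (reduceCyclically.conjugator w.toWord), ?_⟩
  rw [inv_mk, mul_mk, mul_mk, reduceCyclically.conj_conjugator_reduceCyclically, mk_toWord]

theorem cyclen_conj {w w' : F} (h : IsConj w w') : cyclen w = cyclen w' := by
  obtain ⟨L, hL, hc⟩ := exists_rep w
  rw [cyclen_eq hL hc, cyclen_eq hL (hc.trans h)]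

theorem isCyc_rotate {L₁ L₂ : Wd} (h : IsCyclicallyReduced (L₁ ++ L₂)) :
    IsCyclicallyReduced (L₂ ++ L₁) := by
  rcases List.eq_nil_or_concat L₁ with rfl | ⟨M, x, rfl⟩
  · simpa using h
  rcases L₂ with _ | ⟨y, N⟩
  · simpa using h
  unfold IsCyclicallyReduced FreeGroup.IsReduced at h ⊢
  rw [List.isChain_append] at h ⊢
  obtain ⟨⟨h1, h2, h3⟩, h4⟩ := h
  refine ⟨⟨h2, h1, ?_⟩, ?_⟩
  · intro a ha b hb
    apply h4 a _ b _
    · rw [List.getLast?_append]; simp only [Option.mem_def] at ha; simp [ha]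
    · rw [List.head?_append]; simp only [Option.mem_def] at hb; rw [hb]; simp
  · intro a ha b hb
    rw [List.concat_eq_append, ← List.append_assoc, List.getLast?_concat] at ha
    apply h3 a _ b _
    · simpa using ha
    · simpa using hb

theorem isConj_rotate (L₁ L₂ : Wd) : IsConj (mk (L₁ ++ L₂) : F) (mk (L₂ ++ L₁)) := by
  rw [isConj_iff]
  refine ⟨(mk L₁)⁻¹, ?_⟩
  rw [← mul_mk, ← mul_mk]; group

/-! ### Counting letters in blocks of opposite sign -/

/-- sign of the first letter of `L` which is not of kind `x`, with default `r`. -/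
def fstO (x : Fin 2) : Wd → Option Bool → Option Bool
  | [], r => r
  | (y, e) :: L, r => if y = x then fstO x L r else some e

def lstO (x : Fin 2) : Option Bool → Wd → Option Bool
  | l, [] => l
  | l, (y, e) :: L => if y = x then lstO x l L else lstO x (some e) L

def cnt (x : Fin 2) : Option Bool → Wd → Option Bool → ℕ
  | _, [], _ => 0
  | l, (y, e) :: L, r =>
    if y = x then (if l = some (!e) ∧ fstO x L r = some (!e) then 1 else 0) + cnt x l L r
    else cnt x (some e) L r

/-- number of letters of kind `x` of the cyclic word `L` in blocks of the opposite sign. -/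
def cyc (x : Fin 2) (L : Wd) : ℕ := cnt x (lstO x none L) L (fstO x L none)

theorem fstO_append (x : Fin 2) (L M : Wd) (r) : fstO x (L ++ M) r = fstO x L (fstO x M r) := by
  induction L with
  | nil => rfl
  | cons p L ih => obtain ⟨y, e⟩ := p; simp [fstO, ih]

theorem lstO_append (x : Fin 2) (L M : Wd) (l) : lstO x l (L ++ M) = lstO x (lstO x l L) M := by
  induction L generalizing l with
  | nil => rfl
  | cons p L ih => obtain ⟨y, e⟩ := p; simp [lstO, ih]; split <;> rfl

theorem fstO_or (x : Fin 2) (L : Wd) (r) : fstO x L r = (fstO x L none).or r := by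
  induction L with
  | nil => simp [fstO]
  | cons p L ih => obtain ⟨y, e⟩ := p; simp only [fstO]; split <;> simp [ih]

theorem lstO_or (x : Fin 2) (L : Wd) (l) : lstO x l L = (lstO x none L).or l := by
  induction L generalizing l with
  | nil => simp [lstO]
  | cons p L ih =>
    obtain ⟨y, e⟩ := p; simp only [lstO]; split
    · exact ih l
    · rw [ih (some e)]; cases lstO x none L <;> simp

theorem cnt_append (x : Fin 2) (L M : Wd) (l r) :
    cnt x l (L ++ M) r = cnt x l L (fstO x M r) + cnt x (lstO x l L) M r := by
  induction L generalizing l with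
  | nil => simp [cnt, lstO]
  | cons p L ih =>
    obtain ⟨y, e⟩ := p
    simp only [List.cons_append, cnt, lstO, fstO_append]
    split <;> simp [ih, add_assoc]

theorem cnt_le (x : Fin 2) (L : Wd) (l r) : cnt x l L r ≤ L.length := by
  induction L generalizing l with
  | nil => simp [cnt]
  | cons p L ih =>
    obtain ⟨y, e⟩ := p
    have h1 := ih l
    have h2 := ih (some e)
    simp only [cnt, List.length_cons]
    split <;> [split; skip] <;> omega

theorem cyc_rotate (x : Fin 2) (L M : Wd) : cyc x (L ++ M) = cyc x (M ++ L) := by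
  unfold cyc
  rw [cnt_append, cnt_append, add_comm]
  simp only [lstO_append, fstO_append]
  rw [fstO_or x L (fstO x M none), fstO_or x M (fstO x L none), lstO_or x L (lstO x none M),
    lstO_or x M (lstO x none L), fstO_or x M (Option.or _ _), fstO_or x L (Option.or _ _),
    lstO_or x M (Option.or _ _), lstO_or x L (Option.or _ _)]
  generalize fstO x L none = p
  generalize fstO x M none = q
  generalize lstO x none L = p'
  generalize lstO x none M = q'
  cases p <;> cases q <;> cases p' <;> cases q' <;> simp

/-! ### Block decomposition -/

abbrev Blk : Type := List (Bool × ℤ)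

def bpow (n : ℤ) : Wd := List.replicate n.natAbs (1, decide (0 < n))

def word : Blk → Wd
  | [] => []
  | (e, n) :: d => (0, e) :: (bpow n ++ word d)

def nxt : Blk → Bool → Bool
  | [], r => r
  | (e, _) :: _, _ => e

def Valid : Blk → Bool → Prop
  | [], _ => True
  | (e, n) :: d, r => (e ≠ nxt d r → n ≠ 0) ∧ Valid d r

def sig (t : ℕ) : Blk → Bool → Blk
  | [], _ => []
  | (e, n) :: d, r =>
    (e, n + if e = nxt d r then (if e then (t : ℤ) else -(t : ℤ)) else 0) :: sig t d r

theorem nxt_sig (t : ℕ) (d : Blk) (r) : nxt (sig t d r) r = nxt d r := by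
  cases d <;> rfl

theorem valid_sig (t : ℕ) (d : Blk) (r) (h : Valid d r) : Valid (sig t d r) r := by
  induction d with
  | nil => trivial
  | cons p d ih =>
    obtain ⟨e, n⟩ := p
    refine ⟨?_, ih h.2⟩
    rw [nxt_sig]
    intro hne
    simpa [hne] using h.1 hne

theorem exists_blocks (L : Wd) (h : FreeGroup.IsReduced L) : ∃ n d, L = bpow n ++ word d := by
  induction L with
  | nil => exact ⟨0, [], rfl⟩
  | cons p L ih =>
    obtain ⟨y, e⟩ := p
    obtain ⟨n, d, rfl⟩ := ih (h.infix ⟨[(y, e)], [], by simp⟩)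
    have hy : y = 0 ∨ y = 1 := by omega
    rcases hy with rfl | rfl
    · exact ⟨0, (e, n) :: d, rfl⟩
    · have hs : n = 0 ∨ e = decide (0 < n) := by
        by_cases hn : n = 0
        · exact Or.inl hn
        · right
          obtain ⟨m, hm⟩ := Nat.exists_eq_succ_of_ne_zero (Int.natAbs_ne_zero.2 hn)
          rw [bpow, hm, List.replicate_succ] at h
          unfold FreeGroup.IsReduced at h
          rw [List.cons_append, List.isChain_cons_cons] at h
          exact h.1 rfl
      refine ⟨n + if e then 1 else -1, d, ?_⟩
      unfold bpow
      have h2 : (n + if e then 1 else -1).natAbs = n.natAbs + 1 := by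
        cases e <;> simp at hs ⊢ <;> omega
      have h3 : decide (0 < (n + if e then 1 else -1)) = e := by
        cases e <;> simp at hs ⊢ <;> omega
      rw [h2, h3, List.replicate_succ, List.cons_append]
      rcases hs with rfl | hs
      · simp
      · rw [← hs]

theorem reduced_block (e s r : Bool) (n : ℕ) (M : Wd) :
    FreeGroup.IsReduced ((0, e) :: (List.replicate n (1, s) ++ (0, r) :: M)) ↔
      (e ≠ r → n ≠ 0) ∧ FreeGroup.IsReduced (((0, r) :: M : Wd)) := by
  have aux : ∀ n : ℕ, FreeGroup.IsReduced ((1, s) :: (List.replicate n (1, s) ++ (0, r) :: M) : Wd) ↔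
      FreeGroup.IsReduced (((0, r) :: M : Wd)) := by
    intro n
    induction n with
    | zero => simp [FreeGroup.IsReduced]
    | succ n ih =>
      rw [← ih]
      simp [FreeGroup.IsReduced, List.replicate_succ]
  cases n with
  | zero => simp [FreeGroup.IsReduced]
  | succ n => 
    rw [← aux n]
    simp [FreeGroup.IsReduced, List.replicate_succ]

theorem word_head (d : Blk) (r : Bool) : ∃ M, word d ++ [(0, r)] = (0, nxt d r) :: M := by
  rcases d with _ | ⟨⟨e, n⟩, d⟩
  · exact ⟨[], rfl⟩
  · exact ⟨_, rfl⟩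

theorem reduced_word (d : Blk) (r : Bool) : FreeGroup.IsReduced (word d ++ [(0, r)]) ↔ Valid d r := by
  induction d with
  | nil => simp [word, Valid]
  | cons p d ih =>
    obtain ⟨e, n⟩ := p
    obtain ⟨M, hM⟩ := word_head d r
    rw [word, List.cons_append, List.append_assoc, hM, bpow, reduced_block, ← hM, ih, Valid]
    simp

theorem cyc_iff (e : Bool) (L : Wd) :
    IsCyclicallyReduced ((0, e) :: L) ↔ FreeGroup.IsReduced ((0, e) :: L ++ [(0, e)]) := by
  unfold IsCyclicallyReduced FreeGroup.IsReduced
  rw [List.isChain_append]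
  simp

theorem cyc_word (d : Blk) (r : Bool) (hd : d ≠ []) (hr : nxt d r = r) :
    IsCyclicallyReduced (word d) ↔ Valid d r := by
  rcases d with _ | ⟨⟨e, n⟩, d⟩
  · exact absurd rfl hd
  · simp only [nxt] at hr
    subst hr
    rw [← reduced_word, word, cyc_iff]

theorem bpow_all (n : ℤ) : ∀ p ∈ bpow n, p.1 = 1 := by
  intro p hp
  rw [bpow] at hp
  rw [List.eq_of_mem_replicate hp]

theorem exists_word (L : Wd) (h : IsCyclicallyReduced L) :
    (∃ n, L = bpow n) ∨ ∃ L₁ L₂ d, L = L₁ ++ L₂ ∧ L₂ ++ L₁ = word d ∧ d ≠ [] := by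
  obtain ⟨n, d, hL⟩ := exists_blocks L h.isReduced
  by_cases hd : d = []
  · left; subst hd; exact ⟨n, by simpa [word] using hL⟩
  right
  refine ⟨bpow n, word d, ?_⟩
  rw [hL] at h
  have h' := isCyc_rotate h
  obtain ⟨m, d', hd'⟩ := exists_blocks _ h'.isReduced
  refine ⟨d', hL, ?_, ?_⟩
  · rcases d with _ | ⟨⟨e, k⟩, d⟩
    · exact absurd rfl hd
    rw [hd']
    by_cases hm : m = 0
    · subst hm; rfl
    obtain ⟨j, hj⟩ := Nat.exists_eq_succ_of_ne_zero (Int.natAbs_ne_zero.2 hm)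
    rw [bpow, bpow, hj] at hd'
    simp [word, List.replicate_succ] at hd'
  · rintro rfl
    rcases d with _ | ⟨⟨e, k⟩, d⟩
    · exact absurd rfl hd
    have : ((0, e) : Fin 2 × Bool) ∈ bpow m ++ word [] := by rw [← hd']; simp [word]
    simp [word] at this
    have := bpow_all _ _ this
    simp at this

/-! ### The counts in terms of the block data -/

def DBd : Blk → Bool → ℕ
  | [], _ => 0
  | (e, n) :: d, r => (if e = nxt d r ∧ decide (0 < n) ≠ e then n.natAbs else 0) + DBd d r

def fB : Blk → Option Bool → Option Bool
  | [], r => r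
  | (_, n) :: d, r => if n = 0 then fB d r else some (decide (0 < n))

def lB : Option Bool → Blk → Option Bool
  | l, [] => l
  | l, (_, n) :: d => lB (if n = 0 then l else some (decide (0 < n))) d

def Ed : Option Bool → Blk → Option Bool → ℕ
  | _, [], _ => 0
  | l, (e, n) :: d, r =>
    (if l = some (!e) ∧ fB ((e, n) :: d) r = some (!e) then 1 else 0) +
      Ed (if n = 0 then l else some (decide (0 < n))) d r

theorem fstO_rep_same (x : Fin 2) (s : Bool) (n : ℕ) (r) :
    fstO x (List.replicate n (x, s)) r = r := by
  induction n with
  | zero => rfl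
  | succ n ih => simp [List.replicate_succ, fstO, ih]

theorem lstO_rep_same (x : Fin 2) (s : Bool) (n : ℕ) (l) :
    lstO x l (List.replicate n (x, s)) = l := by
  induction n with
  | zero => rfl
  | succ n ih => simp [List.replicate_succ, lstO, ih]

theorem cnt_rep_same (x : Fin 2) (s : Bool) (n : ℕ) (l r) :
    cnt x l (List.replicate n (x, s)) r = if l = some (!s) ∧ r = some (!s) then n else 0 := by
  induction n with
  | zero => simp [cnt]
  | succ n ih =>
    simp only [List.replicate_succ, cnt, ih, fstO_rep_same, if_true]
    split <;> omega

theorem fstO_rep_ne {x y : Fin 2} (h : y ≠ x) (s : Bool) (n : ℕ) (r) :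
    fstO x (List.replicate n (y, s)) r = if n = 0 then r else some s := by
  cases n with
  | zero => rfl
  | succ n => simp [List.replicate_succ, fstO, h]

theorem lstO_rep_ne {x y : Fin 2} (h : y ≠ x) (s : Bool) (n : ℕ) (l) :
    lstO x l (List.replicate n (y, s)) = if n = 0 then l else some s := by
  induction n generalizing l with
  | zero => rfl
  | succ n ih => simp [List.replicate_succ, lstO, ih, h]

theorem cnt_rep_ne {x y : Fin 2} (h : y ≠ x) (s : Bool) (n : ℕ) (l r) :
    cnt x l (List.replicate n (y, s)) r = 0 := by
  induction n generalizing l with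
  | zero => rfl
  | succ n ih => simp [List.replicate_succ, cnt, ih, h]

theorem fstO_one_word (d : Blk) (r : Bool) : fstO 1 (word d) (some r) = some (nxt d r) := by
  rcases d with _ | ⟨⟨e, n⟩, d⟩ <;> simp [word, fstO, nxt]

theorem cnt_one_word (d : Blk) (l) (r : Bool) : cnt 1 l (word d) (some r) = DBd d r := by
  induction d generalizing l with
  | nil => rfl
  | cons p d ih =>
    obtain ⟨e, n⟩ := p
    rw [word, cnt, if_neg (by simp), cnt_append, ih, bpow, cnt_rep_same, fstO_one_word, DBd]
    congr 1
    generalize nxt d r = q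
    generalize decide (0 < n) = s
    cases e <;> cases q <;> cases s <;> simp

theorem cyc_one_word (d : Blk) (r : Bool) (hd : d ≠ []) (hr : nxt d r = r) :
    cyc 1 (word d) = DBd d r := by
  unfold cyc
  have : fstO 1 (word d) none = some r := by
    rcases d with _ | ⟨⟨e, n⟩, d⟩
    · exact absurd rfl hd
    · simpa [word, fstO, nxt] using hr
  rw [this, cnt_one_word]

theorem fstO_zero_word (d : Blk) (r) : fstO 0 (word d) r = fB d r := by
  induction d with
  | nil => rfl
  | cons p d ih =>
    obtain ⟨e, n⟩ := p
    simp [word, fstO, fstO_append, bpow, fstO_rep_ne, ih, fB]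

theorem lstO_zero_word (d : Blk) (l) : lstO 0 l (word d) = lB l d := by
  induction d generalizing l with
  | nil => rfl
  | cons p d ih =>
    obtain ⟨e, n⟩ := p
    simp [word, lstO, lstO_append, bpow, lstO_rep_ne, ih, lB]

theorem cnt_zero_word (d : Blk) (l r) : cnt 0 l (word d) r = Ed l d r := by
  induction d generalizing l with
  | nil => rfl
  | cons p d ih =>
    obtain ⟨e, n⟩ := p
    simp [word, cnt, cnt_append, fstO_append, bpow, fstO_rep_ne, lstO_rep_ne, cnt_rep_ne, ih, Ed,
      fB, fstO_zero_word]
    congr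

theorem cyc_zero_word (d : Blk) : cyc 0 (word d) = Ed (lB none d) d (fB d none) := by
  unfold cyc
  rw [lstO_zero_word, fstO_zero_word, cnt_zero_word]

/-- local step, seen from the left letter -/
theorem step_left (e q : Bool) (n : ℤ) (hv : e ≠ q → n ≠ 0) (A B : Option Bool)
    (h : (if (n + if e = q then (if e then ((1 : ℕ) : ℤ) else -((1 : ℕ) : ℤ)) else 0) = 0 then A
      else some (decide (0 < n + if e = q then (if e then ((1 : ℕ) : ℤ) else -((1 : ℕ) : ℤ)) else 0)))
        = some (!e)) :
    (if n = 0 then B else some (decide (0 < n))) = some (!e) := by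
  cases e <;> cases q <;> simp at h hv ⊢ <;> split at h <;> (try simp at h) <;>
    (try rw [if_neg (by omega)]) <;> simp <;> omega

theorem step_right (e q : Bool) (n : ℤ) (hv : e ≠ q → n ≠ 0) (A B : Option Bool)
    (h : (if (n + if e = q then (if e then ((1 : ℕ) : ℤ) else -((1 : ℕ) : ℤ)) else 0) = 0 then A
      else some (decide (0 < n + if e = q then (if e then ((1 : ℕ) : ℤ) else -((1 : ℕ) : ℤ)) else 0)))
        = some (!q)) :
    (if n = 0 then B else some (decide (0 < n))) = some (!q) := by
  cases e <;> cases q <;> simp at h hv ⊢ <;> split at h <;> (try simp at h) <;>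
    (try rw [if_neg (by omega)]) <;> simp <;> omega

theorem Ed_sig (d : Blk) (r0 : Bool) (l l' r r' : Option Bool) (hv : Valid d r0)
    (hl : l' = some (!(nxt d r0)) → l = some (!(nxt d r0))) :
    Ed l' (sig 1 d r0) r' ≤ Ed l d r := by
  induction d generalizing l l' with
  | nil => simp [sig, Ed]
  | cons p d ih =>
    obtain ⟨e, n⟩ := p
    simp only [sig, Ed]
    apply Nat.add_le_add
    · have himp : (l' = some (!e) ∧ fB ((e, n + if e = nxt d r0 then
          (if e then ((1 : ℕ) : ℤ) else -((1 : ℕ) : ℤ)) else 0) :: sig 1 d r0) r' = some (!e)) →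
          (l = some (!e) ∧ fB ((e, n) :: d) r = some (!e)) := by
        intro h
        refine ⟨hl h.1, ?_⟩
        have h2 := h.2
        simp only [fB] at h2 ⊢
        exact step_left e (nxt d r0) n hv.1 _ _ h2
      by_cases h : (l = some (!e) ∧ fB ((e, n) :: d) r = some (!e))
      · rw [if_pos h]
        have aux : ∀ (p : Prop) [Decidable p], (if p then 1 else 0 : ℕ) ≤ 1 := by
          intro p _; split <;> omega
        exact aux _
      · rw [if_neg h, if_neg (fun h' => h (himp h'))]
    · exact ih _ _ hv.2 (step_right e (nxt d r0) n hv.1 _ _)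

theorem lB_sig (d : Blk) (r0 : Bool) (l l' : Option Bool) (hv : Valid d r0)
    (hl : l' = some (!(nxt d r0)) → l = some (!(nxt d r0)))
    (h : lB l' (sig 1 d r0) = some (!r0)) : lB l d = some (!r0) := by
  induction d generalizing l l' with
  | nil => exact hl h
  | cons p d ih =>
    obtain ⟨e, n⟩ := p
    simp only [sig, lB] at h ⊢
    exact ih _ _ hv.2 (step_right e (nxt d r0) n hv.1 _ _) h

theorem cyc_zero_sig (d : Blk) (r0 : Bool) (hv : Valid d r0) (hr : nxt d r0 = r0) :
    cyc 0 (word (sig 1 d r0)) ≤ cyc 0 (word d) := by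
  rw [cyc_zero_word, cyc_zero_word]
  apply Ed_sig _ _ _ _ _ _ hv
  rw [hr]
  exact lB_sig d r0 none none hv (by simp)

theorem DBd_sig (d : Blk) (r0 : Bool) : DBd (sig 1 d r0) r0 ≤ DBd d r0 := by
  induction d with
  | nil => simp [sig]
  | cons p d ih =>
    obtain ⟨e, n⟩ := p
    simp only [sig, DBd, nxt_sig]
    apply Nat.add_le_add _ ih
    generalize nxt d r0 = q
    cases e <;> cases q <;> simp <;> split <;> (try split) <;> omega

theorem length_sig (d : Blk) (r0 : Bool) (K : ℕ) (h : DBd d r0 ≤ K) :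
    ∃ (c : ℤ) (s : ℕ), ∀ t : ℕ, K ≤ t → ((word (sig t d r0)).length : ℤ) = c + s * t := by
  induction d with
  | nil => exact ⟨0, 0, by simp [sig, word]⟩
  | cons p d ih =>
    obtain ⟨e, n⟩ := p
    rw [DBd] at h
    obtain ⟨c, s, hcs⟩ := ih (by omega)
    by_cases he : e = nxt d r0
    · refine ⟨c + 1 + (if e then n else -n), s + 1, ?_⟩
      intro t ht
      have := hcs t ht
      simp only [sig, word, bpow, List.length_cons, List.length_append, List.length_replicate]
      push_cast
      rw [this, if_pos he, add_mul]
      rw [← he] at h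
      cases e <;> simp at h ⊢
      · split at h
        · rw [abs_of_nonpos (by omega)]; ring
        · rw [abs_of_nonpos (by omega)]; ring
      · split at h
        · rw [abs_of_nonneg (by omega)]; ring
        · rw [abs_of_nonneg (by omega)]; ring
    · refine ⟨c + 1 + |n|, s, ?_⟩
      intro t ht
      have := hcs t ht
      simp only [sig, word, bpow, List.length_cons, List.length_append, List.length_replicate]
      push_cast
      rw [this, if_neg he]
      simp; ring

/-! ### Action of `σ` -/

theorem σ_ga : σ ga = ga * gb := by
  simp [σ, mkAut, ga, MonoidHom.toMulEquiv]

theorem σ_gb : σ gb = gb := by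
  simp [σ, mkAut, gb, MonoidHom.toMulEquiv]

theorem τ_ga : τ ga = ga := by
  simp [τ, mkAut, ga, MonoidHom.toMulEquiv]

theorem τ_gb : τ gb = gb * ga := by
  simp [τ, mkAut, gb, MonoidHom.toMulEquiv]

theorem σ_pow_gb (t : ℕ) : (σ ^ t) gb = gb := by
  induction t with
  | zero => rfl
  | succ t ih => rw [pow_succ, MulAut.mul_apply, σ_gb, ih]

theorem σ_pow_ga (t : ℕ) : (σ ^ t) ga = ga * gb ^ t := by
  induction t with
  | zero => simp
  | succ t ih => rw [pow_succ, MulAut.mul_apply, σ_ga, _root_.map_mul, ih, σ_pow_gb, pow_succ, mul_assoc]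

theorem mk_bpow (n : ℤ) : (mk (bpow n) : F) = gb ^ n := by
  have aux : ∀ (s : Bool) (k : ℕ), (mk (List.replicate k (1, s)) : F) = (cond s gb gb⁻¹) ^ k := by
    intro s k
    induction k with
    | zero => rfl
    | succ k ih =>
      rw [List.replicate_succ, pow_succ', ← ih]
      cases s <;> simp [gb, of, inv_mk, mul_mk, invRev]
  rw [bpow, aux]
  rcases lt_trichotomy n 0 with h | h | h
  · obtain ⟨k, rfl⟩ : ∃ k : ℕ, n = -k := ⟨n.natAbs, by omega⟩
    have : decide (0 < (-(k : ℤ))) = false := decide_eq_false (by omega)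
    rw [this]
    simp
  · subst h; simp
  · obtain ⟨k, rfl⟩ : ∃ k : ℕ, n = k := ⟨n.natAbs, by omega⟩
    have h' : 0 < k := by omega
    simp [h']

theorem mk_word_cons (e : Bool) (n : ℤ) (d : Blk) :
    (mk (word ((e, n) :: d)) : F) = (cond e ga ga⁻¹) * gb ^ n * mk (word d) := by
  rw [← mk_bpow, word, mul_assoc, mul_mk]
  cases e <;> simp [ga, of, inv_mk, mul_mk, invRev]

def cc (t : ℕ) (e : Bool) : F := cond e 1 (gb ^ (-(t : ℤ)))

theorem σ_word (t : ℕ) (d : Blk) (r : Bool) :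
    (σ ^ t) (mk (word d)) = cc t (nxt d r) * mk (word (sig t d r)) * (cc t r)⁻¹ := by
  induction d with
  | nil =>
    have : (mk (word []) : F) = 1 := rfl
    simp [sig, nxt, this]
  | cons p d ih =>
    obtain ⟨e, n⟩ := p
    rw [mk_word_cons, _root_.map_mul, _root_.map_mul, ih, sig, mk_word_cons]
    generalize (mk (word (sig t d r)) : F) = X
    generalize (cc t r)⁻¹ = Y
    rw [map_zpow, σ_pow_gb]
    have h1 : nxt ((e, n) :: d) r = e := rfl
    rw [h1]
    generalize nxt d r = q
    have h2 : (σ ^ t) (cond e ga ga⁻¹) * gb ^ n * cc t q =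
        cc t e * cond e ga ga⁻¹ * gb ^ (n + if e = q then (if e then (t : ℤ) else -(t : ℤ)) else 0) := by
      cases e <;> cases q <;> simp [cc, σ_pow_ga] <;> group
    simp only [← mul_assoc] at h2 ⊢
    rw [h2]

/-! ### The invariant -/

def PP (w : F) (K : ℕ) : Prop :=
  ∃ L : Wd, IsCyclicallyReduced L ∧ IsConj (mk L) w ∧ cyc 0 L ≤ K ∧ cyc 1 L ≤ K

theorem PP_start (w : F) (K : ℕ) (h : cyclen w ≤ K) : PP w K := by
  obtain ⟨L, hL, hc⟩ := exists_rep w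
  rw [cyclen_eq hL hc] at h
  exact ⟨L, hL, hc, (cnt_le _ _ _ _).trans h, (cnt_le _ _ _ _).trans h⟩

theorem aut_conj (φ : MulAut F) {x y : F} (h : IsConj x y) : IsConj (φ x) (φ y) :=
  φ.toMonoidHom.map_isConj h

theorem PP_cases {w : F} {K : ℕ} (h : PP w K) :
    (∃ n : ℤ, IsConj (gb ^ n) w) ∨ ∃ d r, d ≠ [] ∧ nxt d r = r ∧ Valid d r ∧
      IsConj (mk (word d)) w ∧ cyc 0 (word d) ≤ K ∧ DBd d r ≤ K := by
  obtain ⟨L, hL, hc, h0, h1⟩ := h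
  rcases exists_word L hL with ⟨n, rfl⟩ | ⟨L₁, L₂, d, rfl, hd, hne⟩
  · left; exact ⟨n, by rwa [← mk_bpow]⟩
  · right
    have hr : nxt d (nxt d true) = nxt d true := by cases d <;> rfl
    rw [cyc_rotate, hd] at h0 h1
    have hL' := isCyc_rotate hL
    rw [hd] at hL'
    refine ⟨d, nxt d true, hne, hr, (cyc_word d _ hne hr).1 hL', ?_, h0, ?_⟩
    · rw [← hd]; exact (isConj_rotate _ _).trans hc
    · rwa [← cyc_one_word d _ hne hr]

theorem sig_ne {t : ℕ} {d : Blk} {r : Bool} (h : d ≠ []) : sig t d r ≠ [] := by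
  cases d with
  | nil => exact absurd rfl h
  | cons p d => simp [sig]

theorem sig_rep {w : F} {d : Blk} {r : Bool} (t : ℕ) (hd : d ≠ []) (hr : nxt d r = r)
    (hv : Valid d r) (hc : IsConj (mk (word d)) w) :
    IsCyclicallyReduced (word (sig t d r)) ∧ IsConj (mk (word (sig t d r))) ((σ ^ t) w) := by
  constructor
  · rw [cyc_word _ r (sig_ne hd) (by rw [nxt_sig, hr])]
    exact valid_sig t d r hv
  · refine IsConj.trans ?_ (aut_conj (σ ^ t) hc)
    rw [isConj_iff]
    refine ⟨cc t r, ?_⟩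
    rw [σ_word t d r, hr]

theorem PP_σ {w : F} {K : ℕ} (h : PP w K) : PP (σ w) K := by
  rcases PP_cases h with ⟨n, hn⟩ | ⟨d, r, hd, hr, hv, hc, h0, h1⟩
  · obtain ⟨L, hL, hc, h0, h1⟩ := h
    refine ⟨L, hL, ?_, h0, h1⟩
    refine (hc.trans hn.symm).trans ?_
    have := aut_conj σ hn
    rwa [map_zpow, σ_gb] at this
  · obtain ⟨h2, h3⟩ := sig_rep 1 hd hr hv hc
    rw [pow_one] at h3
    refine ⟨_, h2, h3, (cyc_zero_sig d r hv hr).trans h0, ?_⟩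
    rw [cyc_one_word _ r (sig_ne hd) (by rw [nxt_sig, hr])]
    exact (DBd_sig d r).trans h1

theorem PP_lin {w : F} {K : ℕ} (h : PP w K) :
    ∃ (c : ℤ) (s : ℕ), ∀ t : ℕ, K ≤ t → (cyclen ((σ ^ t) w) : ℤ) = c + s * t := by
  rcases PP_cases h with ⟨n, hn⟩ | ⟨d, r, hd, hr, hv, hc, h0, h1⟩
  · refine ⟨cyclen w, 0, fun t _ => ?_⟩
    have := aut_conj (σ ^ t) hn
    rw [map_zpow, σ_pow_gb] at this
    rw [cyclen_conj (this.symm.trans hn)]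
    simp
  · obtain ⟨c, s, hcs⟩ := length_sig d r K h1
    refine ⟨c, s, fun t ht => ?_⟩
    obtain ⟨h2, h3⟩ := sig_rep t hd hr hv hc
    rw [cyclen_eq h2 h3, hcs t ht]

/-! ### The swap symmetry -/

abbrev pw (π : Equiv.Perm (Fin 2)) (L : Wd) : Wd := L.map fun p => (π p.1, p.2)

theorem fstO_pw (π : Equiv.Perm (Fin 2)) (x : Fin 2) (L : Wd) (r) :
    fstO (π x) (pw π L) r = fstO x L r := by
  induction L with
  | nil => rfl
  | cons p L ih => obtain ⟨y, e⟩ := p; simp [pw, fstO] at ih ⊢; rw [ih]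

theorem lstO_pw (π : Equiv.Perm (Fin 2)) (x : Fin 2) (L : Wd) (l) :
    lstO (π x) l (pw π L) = lstO x l L := by
  induction L generalizing l with
  | nil => rfl
  | cons p L ih => obtain ⟨y, e⟩ := p; simp [pw, lstO] at ih ⊢; rw [ih, ih]

theorem cnt_pw (π : Equiv.Perm (Fin 2)) (x : Fin 2) (L : Wd) (l r) :
    cnt (π x) l (pw π L) r = cnt x l L r := by
  induction L generalizing l with
  | nil => rfl
  | cons p L ih =>
    obtain ⟨y, e⟩ := p
    have := fstO_pw π x L r
    simp [pw, cnt] at ih this ⊢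
    rw [ih, ih, this]

theorem cyc_pw (π : Equiv.Perm (Fin 2)) (x : Fin 2) (L : Wd) : cyc (π x) (pw π L) = cyc x L := by
  unfold cyc
  rw [fstO_pw, lstO_pw, cnt_pw]

/-- a letterwise map compatible with cancellation preserves cyclically reduced words -/
theorem isCyc_map (f : Fin 2 × Bool → Fin 2 × Bool)
    (hf : ∀ a b : Fin 2 × Bool, (a.1 = b.1 → a.2 = b.2) → ((f a).1 = (f b).1 → (f a).2 = (f b).2))
    {L : Wd} (h : IsCyclicallyReduced L) : IsCyclicallyReduced (L.map f) := by
  unfold IsCyclicallyReduced FreeGroup.IsReduced at h ⊢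
  refine ⟨?_, ?_⟩
  · rw [List.isChain_map]
    exact h.1.imp hf
  · intro a ha b hb
    rw [List.getLast?_map] at ha
    rw [List.head?_map] at hb
    simp only [Option.mem_def, Option.map_eq_some_iff] at ha hb
    obtain ⟨a', ha', rfl⟩ := ha
    obtain ⟨b', hb', rfl⟩ := hb
    exact hf _ _ (h.2 a' ha' b' hb')

def sw : MulAut F := freeGroupCongr (Equiv.swap 0 1)

theorem sw_mk (L : Wd) : sw (mk L) = mk (pw (Equiv.swap 0 1) L) := rfl

theorem sw_ga : sw ga = gb := by simp [sw, ga, gb]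

theorem sw_gb : sw gb = ga := by simp [sw, ga, gb]

theorem isCyc_sw {L : Wd} (h : IsCyclicallyReduced L) :
    IsCyclicallyReduced (pw (Equiv.swap 0 1) L) := by
  apply isCyc_map _ _ h
  intro a b hab hne
  exact hab ((Equiv.swap 0 1).injective hne)

theorem cyclen_sw (w : F) : cyclen (sw w) = cyclen w := by
  obtain ⟨L, hL, hc⟩ := exists_rep w
  have := aut_conj sw hc
  rw [sw_mk] at this
  rw [cyclen_eq hL hc, cyclen_eq (isCyc_sw hL) this, List.length_map]

theorem PP_sw {w : F} {K : ℕ} (h : PP w K) : PP (sw w) K := by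
  obtain ⟨L, hL, hc, h0, h1⟩ := h
  have := aut_conj sw hc
  rw [sw_mk] at this
  refine ⟨_, isCyc_sw hL, this, ?_, ?_⟩
  · have := cyc_pw (Equiv.swap 0 1) 1 L
    rw [Equiv.swap_apply_right] at this
    rwa [this]
  · have := cyc_pw (Equiv.swap 0 1) 0 L
    rw [Equiv.swap_apply_left] at this
    rwa [this]

theorem aut_ext {φ ψ : MulAut F} (ha : φ ga = ψ ga) (hb : φ gb = ψ gb) : φ = ψ := by
  have : φ.toMonoidHom = ψ.toMonoidHom := by
    ext i
    fin_cases i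
    · exact ha
    · exact hb
  ext w
  exact DFunLike.congr_fun this w

theorem sw_sw : sw * sw = 1 := by
  apply aut_ext <;> simp [MulAut.mul_apply, sw_ga, sw_gb]

theorem sw_sw_apply (w : F) : sw (sw w) = w := by
  rw [← MulAut.mul_apply, sw_sw]; rfl

theorem sw_τ : sw * τ = σ * sw := by
  apply aut_ext <;> simp [MulAut.mul_apply, sw_ga, sw_gb, σ_ga, σ_gb, τ_ga, τ_gb]

theorem sw_τ_pow (t : ℕ) (w : F) : sw ((τ ^ t) w) = (σ ^ t) (sw w) := by
  have : sw * τ ^ t = σ ^ t * sw := (show SemiconjBy sw τ σ from sw_τ).pow_right t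
  exact DFunLike.congr_fun this w

theorem PP_τ {w : F} {K : ℕ} (h : PP w K) : PP (τ w) K := by
  have h1 := PP_sw (PP_σ (PP_sw h))
  have h2 := sw_τ_pow 1 w
  rw [pow_one, pow_one] at h2
  rwa [← h2, sw_sw_apply] at h1

theorem PP_σ_pow {w : F} {K : ℕ} (h : PP w K) (t : ℕ) : PP ((σ ^ t) w) K := by
  induction t with
  | zero => exact h
  | succ t ih => rw [pow_succ']; exact PP_σ ih

theorem PP_τ_pow {w : F} {K : ℕ} (h : PP w K) (t : ℕ) : PP ((τ ^ t) w) K := by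
  induction t with
  | zero => exact h
  | succ t ih => rw [pow_succ']; exact PP_τ ih

theorem PP_chain {w : F} {K : ℕ} (h : PP w K) (c : List (ℕ × ℕ)) : PP (chainC1 c w) K := by
  induction c with
  | nil => exact h
  | cons p c ih =>
    have : chainC1 (p :: c) = τ ^ p.2 * σ ^ p.1 * chainC1 c := by simp [chainC1]
    rw [this]
    exact PP_τ_pow (PP_σ_pow ih _) _

/-! ### The main argument for chains of type (C1) -/

def BTE (u v : F) : Prop := ∃ C : ℝ, 0 < C ∧ ∀ φ : MulAut F,
      (cyclen (φ u) : ℝ) ≤ C * cyclen (φ v) ∧ (cyclen (φ v) : ℝ) ≤ C * cyclen (φ u)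

theorem BTE.symm {u v : F} (h : BTE u v) : BTE v u := by
  obtain ⟨C, hC, h⟩ := h
  exact ⟨C, hC, fun φ => ⟨(h φ).2, (h φ).1⟩⟩

theorem BTE.map {u v : F} (h : BTE u v) (ψ : MulAut F) : BTE (ψ u) (ψ v) := by
  obtain ⟨C, hC, h⟩ := h
  exact ⟨C, hC, fun φ => h (φ * ψ)⟩

theorem one_dir {u v : F} {K : ℕ} (hu : PP u K) (hv : PP v K) (h : BTE u v)
    (he : cyclen ((σ ^ (K + 2)) u) = cyclen ((σ ^ (K + 1)) u)) :
    cyclen ((σ ^ (K + 2)) v) = cyclen ((σ ^ (K + 1)) v) := by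
  obtain ⟨c, s, hs⟩ := PP_lin hu
  obtain ⟨c', s', hs'⟩ := PP_lin hv
  obtain ⟨C, hC, h⟩ := h
  have e1 := hs (K + 1) (by omega)
  have e2 := hs (K + 2) (by omega)
  rw [he] at e2
  push_cast at e1 e2
  have s0 : s = 0 := by
    have : (s : ℤ) = 0 := by linarith
    exact_mod_cast this
  subst s0
  have s0' : s' = 0 := by
    by_contra hne
    have hpos : (1 : ℝ) ≤ s' := by exact_mod_cast Nat.one_le_iff_ne_zero.2 hne
    obtain ⟨t, ht⟩ := exists_nat_gt (max (K : ℝ) (C * c - c'))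
    have ht1 : K ≤ t := by
      have : (K : ℝ) < t := lt_of_le_of_lt (le_max_left _ _) ht
      exact_mod_cast this.le
    have ht2 : C * c - c' < t := lt_of_le_of_lt (le_max_right _ _) ht
    have a1 : (cyclen ((σ ^ t) u) : ℝ) = c := by
      have := hs t ht1
      simp at this
      exact_mod_cast this
    have a2 : (cyclen ((σ ^ t) v) : ℝ) = c' + s' * t := by
      have := hs' t ht1
      exact_mod_cast this
    have := (h (σ ^ t)).2
    rw [a1, a2] at this
    have t0 : (0 : ℝ) ≤ t := Nat.cast_nonneg t
    nlinarith
  subst s0'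
  have e1' := hs' (K + 1) (by omega)
  have e2' := hs' (K + 2) (by omega)
  simp at e1' e2'
  rw [← e1'] at e2'
  exact_mod_cast e2'

theorem main_C1 (u v : F) (K : ℕ) (hu : cyclen u ≤ K) (hv : cyclen v ≤ K) (h : BTE u v)
    (c : List (ℕ × ℕ)) :
    (cyclen ((σ ^ (K + 2)) (chainC1 c u)) = cyclen ((σ ^ (K + 1)) (chainC1 c u)) ↔
        cyclen ((σ ^ (K + 2)) (chainC1 c v)) = cyclen ((σ ^ (K + 1)) (chainC1 c v))) ∧
    (cyclen ((τ ^ (K + 2)) (chainC1 c u)) = cyclen ((τ ^ (K + 1)) (chainC1 c u)) ↔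
        cyclen ((τ ^ (K + 2)) (chainC1 c v)) = cyclen ((τ ^ (K + 1)) (chainC1 c v))) := by
  have pu := PP_chain (PP_start u K hu) c
  have pv := PP_chain (PP_start v K hv) c
  have h' := h.map (chainC1 c)
  refine ⟨⟨one_dir pu pv h', one_dir pv pu h'.symm⟩, ?_⟩
  have h'' := h'.map sw
  have key : ∀ w n, cyclen ((τ ^ n) w) = cyclen ((σ ^ n) (sw w)) := by
    intro w n
    rw [← sw_τ_pow, cyclen_sw]
  simp only [key]
  exact ⟨one_dir (PP_sw pu) (PP_sw pv) h'', one_dir (PP_sw pv) (PP_sw pu) h''.symm⟩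

/-! ### Chains of type (C2) -/

def io : MulAut F :=
  mkAut ga gb⁻¹ ga gb⁻¹
    (by simp [ga, gb]) (by simp [ga, gb]) (by simp [ga, gb]) (by simp [ga, gb])

theorem io_ga : io ga = ga := by
  simp [io, mkAut, ga, MonoidHom.toMulEquiv]

theorem io_gb : io gb = gb⁻¹ := by
  simp [io, mkAut, gb, MonoidHom.toMulEquiv]

abbrev flp (p : Fin 2 × Bool) : Fin 2 × Bool := (p.1, if p.1 = 1 then !p.2 else p.2)

theorem io_mk (L : Wd) : io (mk L) = mk (L.map flp) := by
  induction L with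
  | nil => exact map_one io
  | cons p L ih =>
    have e1 : (mk (p :: L) : F) = mk [p] * mk L := by rw [mul_mk]; rfl
    have e2 : (mk ((p :: L).map flp) : F) = mk [flp p] * mk (L.map flp) := by rw [mul_mk]; rfl
    rw [e1, e2, _root_.map_mul, ih]
    congr 1
    obtain ⟨y, e⟩ := p
    have ha : (mk [(0, true)] : F) = ga := rfl
    have hb : (mk [(1, true)] : F) = gb := rfl
    have ha' : (mk [(0, false)] : F) = ga⁻¹ := rfl
    have hb' : (mk [(1, false)] : F) = gb⁻¹ := rfl
    have hy : y = 0 ∨ y = 1 := by omega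
    rcases hy with rfl | rfl <;> cases e <;> simp [flp, ha, hb, ha', hb', io_ga, io_gb]

theorem cyclen_io (w : F) : cyclen (io w) = cyclen w := by
  obtain ⟨L, hL, hc⟩ := exists_rep w
  have := aut_conj io hc
  rw [io_mk] at this
  have h2 : IsCyclicallyReduced (L.map flp) := by
    apply isCyc_map _ _ hL
    intro a b hab hne
    have h3 : a.1 = b.1 := hne
    simp [flp, h3, hab h3]
  rw [cyclen_eq hL hc, cyclen_eq h2 this, List.length_map]

def OutEq (φ ψ : MulAut F) : Prop := ∀ w, IsConj (φ w) (ψ w)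

theorem OutEq.mul {a b c d : MulAut F} (h : OutEq a b) (h' : OutEq c d) : OutEq (a * c) (b * d) :=
  fun w => (aut_conj a (h' w)).trans (h (d w))

theorem OutEq.refl (a : MulAut F) : OutEq a a := fun _ => IsConj.refl _

theorem OutEq.pow {a b : MulAut F} (h : OutEq a b) (n : ℕ) : OutEq (a ^ n) (b ^ n) := by
  induction n with
  | zero => exact OutEq.refl _
  | succ n ih => rw [pow_succ, pow_succ]; exact ih.mul h

theorem io_io : io * io = 1 := by
  apply aut_ext <;> simp [MulAut.mul_apply, io_ga, io_gb]

theorem io_inv : io⁻¹ = io := inv_eq_of_mul_eq_one_left io_io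

theorem out_σ : OutEq σ⁻¹ (io * σ * io⁻¹) := by
  have : σ⁻¹ = io * σ * io⁻¹ := by
    rw [io_inv]
    apply inv_eq_of_mul_eq_one_left
    apply aut_ext <;> simp [MulAut.mul_apply, io_ga, io_gb, σ_ga, σ_gb]
  rw [this]
  exact OutEq.refl _

theorem out_τ : OutEq τ⁻¹ (io * τ * io⁻¹) := by
  have : τ⁻¹ = MulAut.conj ga * (io * τ * io⁻¹) := by
    rw [io_inv]
    apply inv_eq_of_mul_eq_one_left
    apply aut_ext <;> simp [MulAut.mul_apply, io_ga, io_gb, τ_ga, τ_gb, mul_assoc]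
  intro w
  rw [this, MulAut.mul_apply, MulAut.conj_apply]
  exact (isConj_iff.2 ⟨ga, rfl⟩).symm

theorem out_conj_pow {φ ψ : MulAut F} (h : OutEq φ⁻¹ (io * ψ * io⁻¹)) (n : ℕ) :
    OutEq (φ ^ n)⁻¹ (io * ψ ^ n * io⁻¹) := by
  have := h.pow n
  rwa [conj_pow, inv_pow] at this

theorem out_chain (c : List (ℕ × ℕ)) : OutEq (chainC2 c) (io * chainC1 c * io⁻¹) := by
  induction c with
  | nil => 
    have : io * chainC1 [] * io⁻¹ = 1 := by simp [chainC1]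
    rw [this]
    exact OutEq.refl _
  | cons p c ih =>
    have e1 : chainC1 (p :: c) = τ ^ p.2 * σ ^ p.1 * chainC1 c := by simp [chainC1]
    have e2 : chainC2 (p :: c) = (τ ^ p.2)⁻¹ * (σ ^ p.1)⁻¹ * chainC2 c := by simp [chainC2]
    have := ((out_conj_pow out_τ p.2).mul (out_conj_pow out_σ p.1)).mul ih
    rw [e1, e2]
    have e3 : io * (τ ^ p.2 * σ ^ p.1 * chainC1 c) * io⁻¹ =
      io * τ ^ p.2 * io⁻¹ * (io * σ ^ p.1 * io⁻¹) * (io * chainC1 c * io⁻¹) := by group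
    rw [e3]
    exact this

theorem cyclen_C2 {φ ψ : MulAut F} (h : OutEq φ⁻¹ (io * ψ * io⁻¹)) (n : ℕ) (c : List (ℕ × ℕ))
    (w : F) : cyclen ((φ ^ (-(n : ℤ))) (chainC2 c w)) = cyclen ((ψ ^ n) (chainC1 c (io w))) := by
  have h1 := (out_conj_pow h n).mul (out_chain c)
  have e3 : io * ψ ^ n * io⁻¹ * (io * chainC1 c * io⁻¹) = io * (ψ ^ n * chainC1 c * io) := by
    have e4 : io * (ψ ^ n * chainC1 c * io) = io * (ψ ^ n * chainC1 c * io⁻¹) := by rw [io_inv]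
    rw [e4]; group
  rw [e3] at h1
  have h2 := cyclen_conj (h1 w)
  rw [zpow_neg, zpow_natCast]
  refine h2.trans ?_
  exact cyclen_io _

/-- Theorem 4.8 (converse of Theorem 4.7):  here `k = ‖u‖ + 1`. -/
theorem stmt13 (u v : F) (huv : cyclen v ≤ cyclen u)
    (hbte : ∃ C : ℝ, 0 < C ∧ ∀ φ : MulAut F,
      (cyclen (φ u) : ℝ) ≤ C * cyclen (φ v) ∧ (cyclen (φ v) : ℝ) ≤ C * cyclen (φ u)) :
    (∀ c : List (ℕ × ℕ), c ≠ [] → chainLen c ≤ 2 * cyclen u + 5 →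
      ((cyclen ((σ ^ (cyclen u + 2)) (chainC1 c u)) = cyclen ((σ ^ (cyclen u + 1)) (chainC1 c u)) ↔
        cyclen ((σ ^ (cyclen u + 2)) (chainC1 c v)) = cyclen ((σ ^ (cyclen u + 1)) (chainC1 c v))) ∧
       (cyclen ((τ ^ (cyclen u + 2)) (chainC1 c u)) = cyclen ((τ ^ (cyclen u + 1)) (chainC1 c u)) ↔
        cyclen ((τ ^ (cyclen u + 2)) (chainC1 c v)) = cyclen ((τ ^ (cyclen u + 1)) (chainC1 c v))))) ∧
    (∀ c : List (ℕ × ℕ), c ≠ [] → chainLen c ≤ 2 * cyclen u + 5 →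
      ((cyclen ((σ ^ (-(cyclen u : ℤ) - 2)) (chainC2 c u)) = cyclen ((σ ^ (-(cyclen u : ℤ) - 1)) (chainC2 c u)) ↔
        cyclen ((σ ^ (-(cyclen u : ℤ) - 2)) (chainC2 c v)) = cyclen ((σ ^ (-(cyclen u : ℤ) - 1)) (chainC2 c v))) ∧
       (cyclen ((τ ^ (-(cyclen u : ℤ) - 2)) (chainC2 c u)) = cyclen ((τ ^ (-(cyclen u : ℤ) - 1)) (chainC2 c u)) ↔
        cyclen ((τ ^ (-(cyclen u : ℤ) - 2)) (chainC2 c v)) = cyclen ((τ ^ (-(cyclen u : ℤ) - 1)) (chainC2 c v))))) := by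
  have hb : BTE u v := hbte
  refine ⟨fun c _ _ => main_C1 u v _ le_rfl huv hb c, fun c _ _ => ?_⟩
  have e2 : (-(cyclen u : ℤ) - 2) = -((cyclen u + 2 : ℕ) : ℤ) := by push_cast; ring
  have e1 : (-(cyclen u : ℤ) - 1) = -((cyclen u + 1 : ℕ) : ℤ) := by push_cast; ring
  rw [e1, e2]
  simp only [cyclen_C2 out_σ, cyclen_C2 out_τ]
  exact main_C1 (io u) (io v) (cyclen u) (cyclen_io u).le ((cyclen_io v).trans_le huv)
    (hb.map io) c
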